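/- Let q be a prime power and D an [n,k] cyclic code over F_q with gcd(n,q) = 1. Let α be a primitive n-th root of unity in the splitting field of x^n − 1 over F_q, let s be a positive integer dividing n, and let m = ord_s(q) be the multiplicative order of q modulo s. If the complete defining set Z(D) contains the coset α·G_s = {α^{1+js} : 0 ≤ j < n/s}, then the locality r of D satisfies r < s·(1 − (q^{m−1}−1)/(q^m−1)). -/

import Mathlib

open scoped BigOperators

namespace LRC

/-- Hamming weight of a vector. -/
noncomputable def hwt {n : ℕ} {F : Type*} [Zero F] (c : Fin n → F) : ℕ :=
  Nat.card {i : Fin n // c i ≠ 0}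

/-- A linear code is cyclic if it is closed under the cyclic shift of coordinates. -/
def IsCyclicCode {n : ℕ} [NeZero n] {F : Type*} [Field F] (C : Submodule F (Fin n → F)) : Prop :=
  ∀ c ∈ C, (fun i : Fin n => c (i - 1)) ∈ C

/-- `A` is a recovery set for coordinate `i` of the code `C`. -/
def IsRecoverySet {n : ℕ} {F : Type*} [Field F] (C : Submodule F (Fin n → F)) (i : Fin n)
    (A : Finset (Fin n)) : Prop :=
  i ∉ A ∧ ∃ φ : ((j : A) → F) → F, ∀ c ∈ C, c i = φ (fun j => c j)

/-- The code `C` has locality `r`. -/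
def HasLocality {n : ℕ} {F : Type*} [Field F] (C : Submodule F (Fin n → F)) (r : ℕ) : Prop :=
  ∀ i : Fin n, ∃ A : Finset (Fin n), A.card ≤ r ∧ IsRecoverySet C i A

/-- Complete defining set of zeros of a cyclic code (locator field = symbol field). -/
def definingSet {n : ℕ} {F : Type*} [Field F] (C : Submodule F (Fin n → F)) : Set F :=
  {β | β ^ n = 1 ∧ ∀ c ∈ C, ∑ j : Fin n, c j * β ^ (j : ℕ) = 0}

/-- Complete defining set of zeros of a cyclic code in an extension (locator) field `K`. -/
def definingSetExt (n : ℕ) {F K : Type*} [Field F] [Field K] [Algebra F K]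
    (C : Submodule F (Fin n → F)) : Set K :=
  {β | β ^ n = 1 ∧ ∀ c ∈ C, ∑ j : Fin n, algebraMap F K (c j) * β ^ (j : ℕ) = 0}

/-- The cyclic code with a given set of zeros. -/
def codeOfZeros (n : ℕ) {F : Type*} [Field F] (Z : Set F) : Submodule F (Fin n → F) where
  carrier := {c | ∀ β ∈ Z, ∑ j : Fin n, c j * β ^ (j : ℕ) = 0}
  add_mem' := by
    intro a b ha hb β hβ
    have h1 := ha β hβ
    have h2 := hb β hβ
    calc ∑ j : Fin n, (a + b) j * β ^ (j : ℕ)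
        = (∑ j : Fin n, a j * β ^ (j : ℕ)) + ∑ j : Fin n, b j * β ^ (j : ℕ) := by
          rw [← Finset.sum_add_distrib]
          exact Finset.sum_congr rfl (by intro j _; simp [add_mul])
      _ = 0 := by rw [h1, h2, add_zero]
  zero_mem' := by intro β hβ; simp
  smul_mem' := by
    intro t a ha β hβ
    have h1 := ha β hβ
    calc ∑ j : Fin n, (t • a) j * β ^ (j : ℕ)
        = t * ∑ j : Fin n, a j * β ^ (j : ℕ) := by
          rw [Finset.mul_sum]
          exact Finset.sum_congr rfl (by intro j _; simp [mul_assoc])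
      _ = 0 := by rw [h1, mul_zero]

/-- Minimum distance: least Hamming weight of a nonzero codeword. -/
noncomputable def minDist {n : ℕ} {F : Type*} [Field F] (C : Submodule F (Fin n → F)) : ℕ :=
  sInf {w | ∃ c ∈ C, c ≠ 0 ∧ hwt c = w}

/-- The dual code under the standard bilinear form. -/
def dualCode {n : ℕ} {F : Type*} [Field F] (C : Submodule F (Fin n → F)) :
    Submodule F (Fin n → F) where
  carrier := {y | ∀ c ∈ C, ∑ i : Fin n, c i * y i = 0}
  add_mem' := by
    intro a b ha hb c hc
    have h1 := ha c hc
    have h2 := hb c hc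
    calc ∑ i : Fin n, c i * (a + b) i
        = (∑ i : Fin n, c i * a i) + ∑ i : Fin n, c i * b i := by
          rw [← Finset.sum_add_distrib]
          exact Finset.sum_congr rfl (by intro j _; simp [mul_add])
      _ = 0 := by rw [h1, h2, add_zero]
  zero_mem' := by intro c hc; simp
  smul_mem' := by
    intro t a ha c hc
    have h1 := ha c hc
    calc ∑ i : Fin n, c i * (t • a) i
        = t * ∑ i : Fin n, c i * a i := by
          rw [Finset.mul_sum]
          exact Finset.sum_congr rfl (by intro j _; simp [mul_assoc]; ring)
      _ = 0 := by rw [h1, mul_zero]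

/-- In a finite-dimensional extension generated by `γ`, averaging over the nonzero multiples of a
fixed functional yields a functional vanishing on many powers of `γ`, but not on all of them. -/
lemma exists_dual_card_ne_zero_le {F L : Type*} [Field F] [Fintype F] [DecidableEq F] [Field L]
    [Finite L] [Algebra F L] (γ : L) (hγ : γ ≠ 0) (pb : PowerBasis F L) (hpb : pb.gen = γ) (s : ℕ) :
    ∃ g : L →ₗ[F] F, (∃ t, g (γ ^ t) ≠ 0) ∧
      ((Finset.range s).filter (fun t => g (γ ^ t) ≠ 0)).card *
          (Fintype.card F ^ Module.finrank F L - 1) ≤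
        s * (Fintype.card F ^ Module.finrank F L - Fintype.card F ^ (Module.finrank F L - 1)) := by
  classical
  have := Fintype.ofFinite L
  obtain ⟨f, hf⟩ := exists_ne (0 : L →ₗ[F] F)
  have hker : Fintype.card (LinearMap.ker f) =
      Fintype.card F ^ (Module.finrank F L - 1) := by
    rw [Module.card_eq_pow_finrank (K := F)]
    have h1 := LinearMap.finrank_range_add_finrank_ker f
    rw [LinearMap.range_eq_top.2 (LinearMap.surjective hf), finrank_top, Module.finrank_self] at h1
    congr 1
    omega
  have hL : Fintype.card L = Fintype.card F ^ Module.finrank F L := Module.card_eq_pow_finrank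
  have hcount (x : L) (hx : x ≠ 0) :
      (Finset.univ.filter (fun a : L => a ≠ 0 ∧ f (a * x) ≠ 0)).card =
        Fintype.card F ^ Module.finrank F L - Fintype.card F ^ (Module.finrank F L - 1) := by
    rw [← hL, ← hker, Fintype.card_subtype, ← Finset.card_compl]
    refine Finset.card_bij (fun a _ => a * x) ?_ ?_ ?_
    · intro a ha
      simpa using (Finset.mem_filter.1 ha).2.2
    · intro a _ b _ h
      exact mul_right_cancel₀ hx h
    · intro b hb
      have hb' : f b ≠ 0 := by simpa using hb
      refine ⟨b / x, ?_, div_mul_cancel₀ b hx⟩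
      have : b ≠ 0 := by rintro rfl; simp at hb'
      simp [div_mul_cancel₀ b hx, hb', this, hx]
  have hsum : ∑ a ∈ Finset.univ.erase (0 : L),
      ((Finset.range s).filter (fun t => f (a * γ ^ t) ≠ 0)).card =
      s * (Fintype.card F ^ Module.finrank F L - Fintype.card F ^ (Module.finrank F L - 1)) := by
    simp only [Finset.card_filter]
    rw [Finset.sum_comm]
    have (t : ℕ) : ∑ a ∈ Finset.univ.erase (0 : L), (if f (a * γ ^ t) ≠ 0 then 1 else 0) =
        Fintype.card F ^ Module.finrank F L - Fintype.card F ^ (Module.finrank F L - 1) := by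
      rw [← hcount (γ ^ t) (pow_ne_zero _ hγ), ← Finset.card_filter]
      congr 1
      ext a
      simp
    rw [Finset.sum_congr rfl fun t _ => this t, Finset.sum_const, Finset.card_range, smul_eq_mul]
  have hcard : (Finset.univ.erase (0 : L)).card = Fintype.card F ^ Module.finrank F L - 1 := by
    rw [Finset.card_erase_of_mem (Finset.mem_univ _), Finset.card_univ, hL]
  have hne : (Finset.univ.erase (0 : L)).Nonempty := ⟨1, by simp⟩
  obtain ⟨a, ha, hmin⟩ := Finset.exists_min_image _
    (fun a : L => ((Finset.range s).filter (fun t => f (a * γ ^ t) ≠ 0)).card) hne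
  have ha0 : a ≠ 0 := by simpa using ha
  refine ⟨f ∘ₗ LinearMap.mulLeft F a, ?_, ?_⟩
  · by_contra! h
    apply hf
    have h0 : f ∘ₗ LinearMap.mulLeft F a = 0 := by
      refine pb.basis.ext fun i => ?_
      simpa [hpb] using h i
    ext y
    have := LinearMap.congr_fun h0 (a⁻¹ * y)
    simpa [mul_inv_cancel_left₀ ha0] using this
  · rw [← hsum, ← hcard, mul_comm, ← smul_eq_mul]
    exact Finset.card_nsmul_le_sum _ _ _ hmin

/-- If a polynomial vanishes on the coset `α·⟨α ^ s⟩`, its coefficients satisfy a check supported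
on each residue class of exponents. -/
lemma sum_filter_eq_zero_of_coset {K : Type*} [Field K] {n s : ℕ} [NeZero n] {α : K}
    (hα : IsPrimitiveRoot α n) (hsn : s ∣ n) [DecidableEq K] (c : Fin n → K)
    (hc : ∀ j < n / s, ∑ i : Fin n, c i * (α ^ (1 + j * s)) ^ (i : ℕ) = 0) (i₀ : Fin n) :
    ∑ i ∈ Finset.univ.filter (fun i : Fin n => (α ^ (i : ℕ) / α ^ (i₀ : ℕ)) ^ s = 1),
      c i * α ^ (i : ℕ) = 0 := by
  have hn : 0 < n := NeZero.pos n
  have hα0 : α ≠ 0 := hα.ne_zero hn.ne'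
  have hgeom (i : Fin n) : ∑ j ∈ Finset.range (n / s), ((α ^ (i : ℕ) / α ^ (i₀ : ℕ)) ^ s) ^ j =
      if (α ^ (i : ℕ) / α ^ (i₀ : ℕ)) ^ s = 1 then ((n / s : ℕ) : K) else 0 := by
    split_ifs with h
    · simp [h]
    · rw [geom_sum_eq h, ← pow_mul, Nat.mul_div_cancel' hsn, div_pow, ← pow_mul, ← pow_mul,
        mul_comm _ n, mul_comm _ n, pow_mul, pow_mul, hα.pow_eq_one]
      simp
  have hν : ((n / s : ℕ) : K) ≠ 0 := by
    have := hα.neZero'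
    intro h
    apply this.out
    rw [← Nat.div_mul_cancel hsn, Nat.cast_mul, h, zero_mul]
  have key : ((n / s : ℕ) : K) * ∑ i ∈ Finset.univ.filter
      (fun i : Fin n => (α ^ (i : ℕ) / α ^ (i₀ : ℕ)) ^ s = 1), c i * α ^ (i : ℕ) =
      ∑ j ∈ Finset.range (n / s), ((α ^ (i₀ : ℕ)) ^ (s * j))⁻¹ *
        ∑ i : Fin n, c i * (α ^ (1 + j * s)) ^ (i : ℕ) := by
    simp only [Finset.mul_sum]
    rw [Finset.sum_comm, Finset.sum_filter]
    refine Finset.sum_congr rfl fun i _ => ?_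
    have hterm (j : ℕ) : ((α ^ (i₀ : ℕ)) ^ (s * j))⁻¹ * (c i * (α ^ (1 + j * s)) ^ (i : ℕ)) =
        c i * α ^ (i : ℕ) * ((α ^ (i : ℕ) / α ^ (i₀ : ℕ)) ^ s) ^ j := by
      rw [← pow_mul _ s j, div_pow]
      field_simp
      ring
    simp only [hterm]
    rw [← Finset.mul_sum, hgeom]
    split_ifs <;> ring
  refine (mul_eq_zero.1 (key.trans (Finset.sum_eq_zero fun j hj => ?_))).resolve_left hν
  rw [hc j (Finset.mem_range.1 hj), mul_zero]

/-- A linear check `∑ j ∈ S, c j * u j = 0` with `u i ≠ 0` recovers coordinate `i` from the rest of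
its support. -/
lemma isRecoverySet_of_check {n : ℕ} {F : Type*} [Field F] [DecidableEq F]
    (C : Submodule F (Fin n → F)) (S : Finset (Fin n)) (u : Fin n → F)
    (hu : ∀ c ∈ C, ∑ j ∈ S, c j * u j = 0) {i : Fin n} (hi : i ∈ S) (hui : u i ≠ 0) :
    IsRecoverySet C i ((S.filter (fun j => u j ≠ 0)).erase i) := by
  refine ⟨Finset.notMem_erase _ _, fun v => -(∑ j, v j * u j) / u i, fun c hc => ?_⟩
  dsimp only
  rw [Finset.sum_coe_sort _ (fun j => c j * u j), eq_div_iff hui, eq_neg_iff_add_eq_zero,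
    Finset.add_sum_erase _ (fun j => c j * u j) (Finset.mem_filter.2 ⟨hi, hui⟩), Finset.sum_filter]
  refine Eq.trans ?_ (hu c hc)
  refine Finset.sum_congr rfl fun j _ => ?_
  by_cases h : u j = 0 <;> simp [h]

/-- The bound `1 - (q ^ (d - 1) - 1) / (q ^ d - 1)` decreases with `d`. -/
lemma div_pow_sub_one_le {q : ℝ} (hq : 1 < q) {m d : ℕ} (hmd : m ≤ d) (hd : 0 < d) :
    (q ^ (m - 1) - 1) / (q ^ m - 1) ≤ (q ^ (d - 1) - 1) / (q ^ d - 1) := by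
  have hpos (e : ℕ) (he : 0 < e) : 0 < q ^ e - 1 := sub_pos.2 (one_lt_pow₀ hq he.ne')
  rcases Nat.eq_zero_or_pos m with rfl | hm
  · simpa using div_nonneg (sub_nonneg.2 (one_le_pow₀ hq.le)) (hpos d hd).le
  · rw [div_le_div_iff₀ (hpos m hm) (hpos d hd)]
    obtain ⟨m, rfl⟩ := Nat.exists_eq_succ_of_ne_zero hm.ne'
    obtain ⟨d, rfl⟩ := Nat.exists_eq_succ_of_ne_zero hd.ne'
    have hle : q ^ m ≤ q ^ d := pow_le_pow_right₀ hq.le (by omega)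
    simp only [Nat.succ_eq_add_one, Nat.add_sub_cancel, pow_succ]
    nlinarith

/-- if the complete defining set of a cyclic code over `F_q` contains the coset
`α·G_s`, then its locality `r` satisfies `r < s(1 − (q^{m−1}−1)/(q^m−1))`. -/
theorem stmt7 {F K : Type*} [Field F] [Fintype F] [Field K] [Fintype K] [Algebra F K]
    (q n k s m : ℕ) [NeZero n] (hq : Fintype.card F = q) (hnq : Nat.Coprime n q)
    (α : K) (hα : IsPrimitiveRoot α n)
    (hs : 0 < s) (hsn : s ∣ n)
    -- `m = ord_s(q)`: the multiplicative order of `q` modulo `s`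
    (hm1 : s ∣ q ^ m - 1) (hm2 : ∀ k' : ℕ, 0 < k' → s ∣ q ^ k' - 1 → m ≤ k')
    (D : Submodule F (Fin n → F)) (hcyc : IsCyclicCode D) (hk : Module.finrank F D = k)
    (hcoset : {β | ∃ j : ℕ, j < n / s ∧ β = α ^ (1 + j * s)} ⊆ definingSetExt n D) :
    ∃ r : ℕ, HasLocality D r ∧
      (r : ℝ) < (s : ℝ) * (1 - ((q : ℝ) ^ (m - 1) - 1) / ((q : ℝ) ^ m - 1)) := by
  classical
  subst hq
  have hn : 0 < n := NeZero.pos n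
  have hα0 : α ≠ 0 := hα.ne_zero hn.ne'
  obtain ⟨ν, hν⟩ := hsn
  have hγ : IsPrimitiveRoot (α ^ ν) s := hα.pow hn (by rw [hν, mul_comm])
  set γ := α ^ ν with hγ_def
  have hint : IsIntegral F γ := Algebra.IsIntegral.isIntegral γ
  let L := IntermediateField.adjoin F {γ}
  let pb : PowerBasis F L := IntermediateField.adjoin.powerBasis hint
  let γ' : L := IntermediateField.AdjoinSimple.gen F γ
  have hγ'γ : (γ' : K) = γ := IntermediateField.AdjoinSimple.coe_gen F γ
  have hγ' : IsPrimitiveRoot γ' s :=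
    IsPrimitiveRoot.of_map_of_injective (f := algebraMap L K) (by
      change IsPrimitiveRoot (γ' : K) s
      rwa [hγ'γ]) (algebraMap L K).injective
  have hγ'0 : γ' ≠ 0 := hγ'.ne_zero hs.ne'
  set q := Fintype.card F with hq
  set d := Module.finrank F L with hd
  have hd0 : 0 < d := Module.finrank_pos
  have hmd : m ≤ d := by
    refine hm2 d hd0 (hγ'.dvd_of_pow_eq_one _ ?_)
    have := Fintype.ofFinite L
    have hcard : Fintype.card L = q ^ d := Module.card_eq_pow_finrank
    rw [← hcard]
    exact FiniteField.pow_card_sub_one_eq_one γ' hγ'0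
  obtain ⟨g, ⟨t₀, ht₀⟩, hg⟩ := exists_dual_card_ne_zero_le γ' hγ'0 pb
    (IntermediateField.adjoin.powerBasis_gen hint) s
  obtain ⟨G, hG⟩ := LinearMap.exists_extend (p := Subalgebra.toSubmodule L.toSubalgebra) g
  have hGg (t : ℕ) : G (γ ^ t) = g (γ' ^ t) := by
    have := LinearMap.congr_fun hG (γ' ^ t)
    rw [← this, ← hγ'γ]
    rfl
  set w := ((Finset.range s).filter (fun t => g (γ' ^ t) ≠ 0)).card with hw
  have hw0 : 0 < w := by
    refine Finset.card_pos.2 ⟨t₀ % s, Finset.mem_filter.2 ⟨Finset.mem_range.2 (Nat.mod_lt _ hs), ?_⟩⟩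
    rwa [hγ'.eq_orderOf, pow_mod_orderOf]
  refine ⟨w - 1, fun i => ?_, ?_⟩
  · let S := Finset.univ.filter (fun j : Fin n => (α ^ (j : ℕ) / α ^ (i : ℕ)) ^ s = 1)
    let u : Fin n → F := fun j => G (α ^ (j : ℕ) / α ^ (i : ℕ) * γ ^ t₀)
    have hui : u i ≠ 0 := by
      simp only [u, div_self (pow_ne_zero _ hα0), one_mul, hGg]
      exact ht₀
    have hiS : i ∈ S := by simp [S, div_self (pow_ne_zero _ hα0)]
    refine ⟨(S.filter (fun j => u j ≠ 0)).erase i, ?_, isRecoverySet_of_check D S u ?_ hiS hui⟩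
    · rw [Finset.card_erase_of_mem (Finset.mem_filter.2 ⟨hiS, hui⟩)]
      refine Nat.sub_le_sub_right ?_ 1
      have hinj : Function.Injective
          (fun j : Fin n => α ^ (j : ℕ) / α ^ (i : ℕ) * γ ^ t₀) := by
        intro a b hab
        have h1 := mul_right_cancel₀ (pow_ne_zero _ (pow_ne_zero _ hα0)) hab
        rw [div_left_inj' (pow_ne_zero _ hα0)] at h1
        exact Fin.ext (hα.pow_inj a.2 b.2 h1)
      rw [← Finset.card_image_of_injective _ hinj, hw]
      refine (Finset.card_le_card ?_).trans (Finset.card_image_le (f := fun t => γ ^ t))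
      intro x hx
      obtain ⟨j, hj, rfl⟩ := Finset.mem_image.1 hx
      obtain ⟨hjS, hju⟩ := Finset.mem_filter.1 hj
      have hone : (α ^ (j : ℕ) / α ^ (i : ℕ) * γ ^ t₀) ^ s = 1 := by
        rw [mul_pow, (Finset.mem_filter.1 hjS).2, ← pow_mul, mul_comm t₀, pow_mul,
          hγ.pow_eq_one, one_pow, one_mul]
      have := NeZero.of_pos hs
      obtain ⟨t, hts, ht⟩ := hγ.eq_pow_of_pow_eq_one hone
      refine Finset.mem_image.2 ⟨t, Finset.mem_filter.2 ⟨Finset.mem_range.2 hts, ?_⟩, ht⟩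
      rw [← hGg, ht]
      exact hju
    · intro c hc
      have h := sum_filter_eq_zero_of_coset hα ⟨ν, hν⟩ (fun j => algebraMap F K (c j))
        (fun j hj => (hcoset ⟨j, hj, rfl⟩).2 c hc) i
      have h2 := congrArg (fun x => G (x * (γ ^ t₀ / α ^ (i : ℕ)))) h
      simp only [zero_mul, map_zero, Finset.sum_mul, map_sum] at h2
      rw [← h2]
      refine Finset.sum_congr rfl fun j _ => ?_
      rw [← smul_eq_mul, ← map_smul, Algebra.smul_def]
      congr 1
      ring
  · have hq1 : 1 < q := Fintype.one_lt_card
    have hqR : (1 : ℝ) < q := by exact_mod_cast hq1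
    have hpos : (0 : ℝ) < (q : ℝ) ^ d - 1 := sub_pos.2 (one_lt_pow₀ hqR hd0.ne')
    have hgR : (w : ℝ) * ((q : ℝ) ^ d - 1) ≤ s * ((q : ℝ) ^ d - (q : ℝ) ^ (d - 1)) := by
      have := (Nat.cast_le (α := ℝ)).2 hg
      rwa [Nat.cast_mul, Nat.cast_mul, Nat.cast_sub (Nat.one_le_pow _ _ (by omega)),
        Nat.cast_sub (Nat.pow_le_pow_right (by omega) (Nat.sub_le _ _)), Nat.cast_pow,
        Nat.cast_pow, Nat.cast_one] at this
    calc ((w - 1 : ℕ) : ℝ) < w := by exact_mod_cast Nat.sub_lt hw0 one_pos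
      _ ≤ s * (1 - ((q : ℝ) ^ (d - 1) - 1) / ((q : ℝ) ^ d - 1)) := by
        rw [one_sub_div hpos.ne', mul_div_assoc', le_div_iff₀ hpos]
        linarith
      _ ≤ _ := mul_le_mul_of_nonneg_left (sub_le_sub_left (div_pow_sub_one_le hqR hmd hd0) 1)
        (Nat.cast_nonneg s)

end LRC
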